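/- arXiv:1409.4748 — 6 statements merged into one kernel-verified Lean document; each statement's English description precedes it below -/
import Mathlib

section
/- Assume θ^{*,n} → θ* as n → ∞ and that [H-1] holds. Then n^α (θ^{*,n} − θ*) → Dh(θ*)^{-1} Λ^0_1(θ*) as n → ∞; in particular θ^{*,n} − θ* = C_1 n^{−α} + o(n^{−α}) with C_1 = Dh(θ*)^{-1} Λ^0_1(θ*). -/
open Filter Topology

/-- First-order expansion of the implicit discretization error: under [H-1]
(first-order expansion `h − h^n = Λ⁰₁ n^{−α} + o(n^{−α})`, local uniform convergence
of `Dh^n` to `Dh`, and invertibility of `Dh(θ*)`), if `θ^{*,n} → θ*` then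
`n^α (θ^{*,n} − θ*) → Dh(θ*)⁻¹ Λ⁰₁(θ*)`, i.e.
`θ^{*,n} − θ* = C₁ n^{−α} + o(n^{−α})` with `C₁ = Dh(θ*)⁻¹ Λ⁰₁(θ*)`. -/
theorem implicit_error_first_order_expansion {d : ℕ} (α : ℝ) (hα : 0 < α)
    (h : EuclideanSpace ℝ (Fin d) → EuclideanSpace ℝ (Fin d))
    (hn : ℕ → EuclideanSpace ℝ (Fin d) → EuclideanSpace ℝ (Fin d))
    (θs : EuclideanSpace ℝ (Fin d)) (θn : ℕ → EuclideanSpace ℝ (Fin d))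
    (hsmooth : ContDiff ℝ 1 h) (hnsmooth : ∀ n, ContDiff ℝ 1 (hn n))
    (hzero : h θs = 0) (hnzero : ∀ n, hn n (θn n) = 0)
    (Λ : EuclideanSpace ℝ (Fin d) → EuclideanSpace ℝ (Fin d))
    -- [H-1] (i): h(θ) − hⁿ(θ) = Λ(θ) n^{−α} + o(n^{−α})
    (hexp : ∀ θ, Tendsto (fun n : ℕ => ((n : ℝ) ^ α) • (h θ - hn n θ)) atTop (𝓝 (Λ θ)))
    -- [H-1] (ii): Dhⁿ → Dh locally uniformly
    (hDconv : TendstoLocallyUniformly (fun n => fderiv ℝ (hn n)) (fderiv ℝ h) atTop)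
    -- [H-1] (iii): Dh(θ*) is invertible, with (two-sided) inverse B
    (B : EuclideanSpace ℝ (Fin d) →L[ℝ] EuclideanSpace ℝ (Fin d))
    (hB1 : (fderiv ℝ h θs).comp B = ContinuousLinearMap.id ℝ _)
    (hB2 : B.comp (fderiv ℝ h θs) = ContinuousLinearMap.id ℝ _)
    (hθconv : Tendsto θn atTop (𝓝 θs)) :
    Tendsto (fun n : ℕ => ((n : ℝ) ^ α) • (θn n - θs)) atTop (𝓝 (B (Λ θs))) := by
  have key : (fun n : ℕ => ((n : ℝ) ^ α) • (h θs - hn n θs)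
      - fderiv ℝ h θs (((n : ℝ) ^ α) • (θn n - θs))) =o[atTop]
      (fun n : ℕ => ((n : ℝ) ^ α) • (θn n - θs)) := by
    rw [Asymptotics.isLittleO_iff]
    intro ε hε
    obtain ⟨t, ht, hev⟩ := Metric.tendstoLocallyUniformly_iff.1 hDconv (ε / 2) (by positivity) θs
    have hcont : ContinuousAt (fderiv ℝ h) θs :=
      (hsmooth.continuous_fderiv (by norm_num)).continuousAt
    have hc := Metric.continuousAt_iff'.1 hcont (ε / 2) (by positivity)
    obtain ⟨r, hr, hball⟩ := Metric.mem_nhds_iff.1 (Filter.inter_mem ht hc)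
    filter_upwards [hev, hθconv (Metric.ball_mem_nhds θs hr)] with n hn1 hn2
    have hmv := (convex_ball θs r).norm_image_sub_le_of_norm_fderiv_le' (𝕜 := ℝ) (f := hn n)
      (C := ε) (φ := fderiv ℝ h θs)
      (fun x _ => ((hnsmooth n).differentiable (by norm_num)) x)
      (fun x hx => by
        have h1 := hn1 x (hball hx).1
        have h2 : dist (fderiv ℝ h x) (fderiv ℝ h θs) < ε / 2 := (hball hx).2
        rw [← dist_eq_norm]
        have h3 := dist_triangle_left (fderiv ℝ (hn n) x) (fderiv ℝ h θs) (fderiv ℝ h x)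
        linarith) (Metric.mem_ball_self hr) hn2
    rw [hnzero] at hmv
    rw [hzero, map_smul, ← smul_sub, norm_smul, norm_smul]
    calc _ ≤ ‖(n : ℝ) ^ α‖ * (ε * ‖θn n - θs‖) :=
          mul_le_mul_of_nonneg_left hmv (norm_nonneg _)
      _ = _ := by ring
  have key2 : Asymptotics.IsEquivalent atTop
      (fun n : ℕ => B (((n : ℝ) ^ α) • (h θs - hn n θs)))
      (fun n : ℕ => ((n : ℝ) ^ α) • (θn n - θs)) := by
    refine ((B.isBigO_comp _ atTop).trans_isLittleO key).congr_left ?_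
    intro n
    have := DFunLike.congr_fun hB2 (((n : ℝ) ^ α) • (θn n - θs))
    simp only [ContinuousLinearMap.comp_apply, ContinuousLinearMap.id_apply] at this
    rw [map_sub, this]
    rfl
  exact key2.tendsto_nhds ((B.continuous.tendsto _).comp (hexp θs))
end

section
/- Let Cost(n, M) = K M n R(R+1)/2. Then, as ε → 0, inf { Cost(n, M) : (n, M) ∈ (ℕ*)², μ_R n^{−αR}(1 + |ε_{R+1}(n)|) + ν_R γ(M)^{1/2}(1 + φ_1(n) + φ_2(M)) ≤ ε } is asymptotically equivalent to K · (R(R+1)/2) · γ_0^{1/β} ν_R^{2/β} μ_R^{1/(αR)} · ε^{−(2/β + 1/(αR))} · (1 + 2αR/β)^{1/(αR)} · (1 + β/(2αR))^{2/β}. Moreover this asymptotic bound may be achieved with parameters n(ε) ∼ (2αR/β + 1)^{1/(αR)} μ_R^{1/(αR)} ε^{−1/(αR)} and M(ε) ∼ γ_0^{1/β} ν_R^{2/β} (1 + β/(2αR))^{2/β} ε^{−2/β}. -/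
open Filter Topology Real

/-- Weighted AM-GM lower bound on `n * M` under the simplified constraint. -/
lemma rr_lower (a b μ m ε n M : ℝ) (ha : 0 < a) (hb : 0 < b) (hμ : 0 < μ) (hm : 0 < m)
    (hε : 0 < ε) (hn : 0 < n) (hM : 0 < M) (h : μ * n ^ (-a) + m * M ^ (-b) ≤ ε) :
    ((1 + a / b) * μ) ^ (1 / a) * ((1 + b / a) * m) ^ (1 / b) * ε ^ (-(1 / b + 1 / a)) ≤ n * M := by
  have hN : 0 < n ^ (-a) := rpow_pos_of_pos hn _
  have hMM : 0 < M ^ (-b) := rpow_pos_of_pos hM _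
  have c1 : 0 < 1 + a / b := by positivity
  have c2 : 0 < 1 + b / a := by positivity
  set X := (1 + a / b) * μ * n ^ (-a) / ε with hX
  set Y := (1 + b / a) * m * M ^ (-b) / ε with hY
  have hXp : 0 < X := by positivity
  have hYp : 0 < Y := by positivity
  have key := Real.geom_mean_le_arith_mean2_weighted (w₁ := b / (a + b)) (w₂ := a / (a + b))
    (p₁ := X) (p₂ := Y) (by positivity) (by positivity) hXp.le hYp.le (by field_simp; ring)
  have hs : b / (a + b) * X + a / (a + b) * Y ≤ 1 := by
    have : b / (a + b) * X + a / (a + b) * Y = (μ * n ^ (-a) + m * M ^ (-b)) / ε := by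
      rw [hX, hY]; field_simp; ring
    rw [this, div_le_one hε]; exact h
  have k2 := Real.rpow_le_one (z := 1 / a + 1 / b) (by positivity) (key.trans hs) (by positivity)
  rw [mul_rpow (by positivity) (by positivity), ← rpow_mul hXp.le, ← rpow_mul hYp.le] at k2
  have e1 : b / (a + b) * (1 / a + 1 / b) = 1 / a := by field_simp; ring
  have e2 : a / (a + b) * (1 / a + 1 / b) = 1 / b := by field_simp; ring
  rw [e1, e2] at k2
  have eX : X ^ (1 / a) = ((1 + a / b) * μ) ^ (1 / a) * ε ^ (-(1 / a)) / n := by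
    rw [hX, div_rpow (by positivity) hε.le, mul_rpow (by positivity) hN.le, ← rpow_mul hn.le,
      show -a * (1 / a) = -1 by field_simp, rpow_neg_one, rpow_neg hε.le]
    field_simp
  have eY : Y ^ (1 / b) = ((1 + b / a) * m) ^ (1 / b) * ε ^ (-(1 / b)) / M := by
    rw [hY, div_rpow (by positivity) hε.le, mul_rpow (by positivity) hMM.le, ← rpow_mul hM.le,
      show -b * (1 / b) = -1 by field_simp, rpow_neg_one, rpow_neg hε.le]
    field_simp
  rw [eX, eY, div_mul_div_comm, div_le_one (by positivity)] at k2
  rw [neg_add, rpow_add hε]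
  linarith

lemma rr_neg_pow_atTop (p : ℝ) (hp : 0 < p) :
    Tendsto (fun ε : ℝ => ε ^ (-p)) (𝓝[>] (0 : ℝ)) atTop :=
  tendsto_rpow_neg_nhdsGT_zero (neg_neg_of_pos hp)

lemma rr_ceil (p : ℝ) (hp : 0 < p) (s : ℝ → ℝ) (S : ℝ) (hS : 0 < S)
    (hs : Tendsto s (𝓝[>] (0 : ℝ)) (𝓝 S)) :
    Tendsto (fun ε => (⌈(s ε / ε) ^ p⌉₊ : ℝ) / (S ^ p * ε ^ (-p))) (𝓝[>] (0 : ℝ)) (𝓝 1) ∧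
    Tendsto (fun ε => (s ε / ε) ^ p) (𝓝[>] (0 : ℝ)) atTop := by
  have hsp : Tendsto (fun ε => s ε ^ p) (𝓝[>] (0 : ℝ)) (𝓝 (S ^ p)) :=
    hs.rpow_const (Or.inl hS.ne')
  have hSp : 0 < S ^ p := rpow_pos_of_pos hS p
  have heq : ∀ᶠ ε in 𝓝[>] (0 : ℝ), s ε ^ p * ε ^ (-p) = (s ε / ε) ^ p := by
    filter_upwards [hs.eventually (lt_mem_nhds hS), self_mem_nhdsWithin] with ε h1 h2
    have h2 : 0 < ε := h2
    rw [div_rpow h1.le h2.le, rpow_neg h2.le]; rfl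
  have hT : Tendsto (fun ε => (s ε / ε) ^ p) (𝓝[>] (0 : ℝ)) atTop :=
    ((hsp.pos_mul_atTop hSp (rr_neg_pow_atTop p hp))).congr' heq
  refine ⟨?_, hT⟩
  have h1 := (tendsto_nat_ceil_div_atTop (R := ℝ)).comp hT
  have h2 := h1.mul (hsp.div_const (S ^ p))
  rw [div_self hSp.ne', mul_one] at h2
  refine h2.congr' ?_
  filter_upwards [heq, hs.eventually (lt_mem_nhds hS), self_mem_nhdsWithin] with ε h1 h3 h2
  have h2 : 0 < ε := h2
  have := rpow_pos_of_pos h2 (-p)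
  have := rpow_pos_of_pos h3 p
  simp only [Function.comp]
  rw [← h1]
  field_simp

lemma rr_upper (a b μ m : ℝ) (ha : 0 < a) (hb : 0 < b) (hμ : 0 < μ) (hm : 0 < m)
    (e φ1 φ2 : ℕ → ℝ) (he : Tendsto e atTop (𝓝 0)) (hφ1nn : ∀ n, 0 ≤ φ1 n)
    (hφ2nn : ∀ n, 0 ≤ φ2 n)
    (hφ1 : Tendsto φ1 atTop (𝓝 0)) (hφ2 : Tendsto φ2 atTop (𝓝 0)) (hanti : Antitone φ2) :
    ∃ nf Mf : ℝ → ℕ,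
      (∀ᶠ ε in 𝓝[>] (0 : ℝ), 1 ≤ nf ε ∧ 1 ≤ Mf ε ∧
        μ * (nf ε : ℝ) ^ (-a) * (1 + |e (nf ε)|) +
          m * (Mf ε : ℝ) ^ (-b) * (1 + φ1 (nf ε) + φ2 (Mf ε)) ≤ ε) ∧
      Tendsto (fun ε => (nf ε : ℝ) / (((1 + a / b) * μ) ^ (1 / a) * ε ^ (-(1 / a))))
        (𝓝[>] (0 : ℝ)) (𝓝 1) ∧
      Tendsto (fun ε => (Mf ε : ℝ) / (((1 + b / a) * m) ^ (1 / b) * ε ^ (-(1 / b))))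
        (𝓝[>] (0 : ℝ)) (𝓝 1) := by
  have c1 : 0 < 1 + a / b := by positivity
  have c2 : 0 < 1 + b / a := by positivity
  have hA : 0 < (1 + a / b) * μ := by positivity
  obtain ⟨hn1, hn2⟩ := rr_ceil (1 / a) (by positivity) (fun _ => (1 + a / b) * μ) _ hA
    tendsto_const_nhds
  obtain ⟨-, hM2⟩ := rr_ceil (1 / b) (by positivity) (fun _ => m) _ hm tendsto_const_nhds
  set nf : ℝ → ℕ := fun ε => ⌈((1 + a / b) * μ / ε) ^ (1 / a)⌉₊ with hnf
  set M0 : ℝ → ℕ := fun ε => ⌈(m / ε) ^ (1 / b)⌉₊ with hM0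
  have hnT : Tendsto nf (𝓝[>] (0 : ℝ)) atTop := tendsto_nat_ceil_atTop.comp hn2
  have hMT : Tendsto M0 (𝓝[>] (0 : ℝ)) atTop := tendsto_nat_ceil_atTop.comp hM2
  -- remaining budget
  set y : ℝ → ℝ := fun ε => 1 - (1 + a / b)⁻¹ * (1 + |e (nf ε)|) with hy
  set s : ℝ → ℝ := fun ε => m * (1 + φ1 (nf ε) + φ2 (M0 ε)) / y ε with hs
  have hyT : Tendsto y (𝓝[>] (0 : ℝ)) (𝓝 ((1 + b / a)⁻¹)) := by
    have h1 := (((he.comp hnT).abs.const_add 1).const_mul ((1 + a / b)⁻¹)).const_sub 1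
    have : 1 - (1 + a / b)⁻¹ * (1 + |(0:ℝ)|) = (1 + b / a)⁻¹ := by
      rw [abs_zero]; field_simp; ring
    rw [this] at h1
    exact h1
  have hsT : Tendsto s (𝓝[>] (0 : ℝ)) (𝓝 ((1 + b / a) * m)) := by
    have h1 := ((((hφ1.comp hnT).const_add 1).add (hφ2.comp hMT)).const_mul m).div hyT
      (inv_pos.mpr c2).ne'
    have : m * (1 + 0 + 0) / (1 + b / a)⁻¹ = (1 + b / a) * m := by
      rw [div_inv_eq_mul]; ring
    rw [this] at h1
    exact h1
  obtain ⟨hf1, hf2⟩ := rr_ceil (1 / b) (by positivity) s _ (by positivity) hsT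
  refine ⟨nf, fun ε => ⌈(s ε / ε) ^ (1 / b)⌉₊, ?_, hn1, hf1⟩
  filter_upwards [hnT.eventually_ge_atTop 1, hf2.eventually_gt_atTop 0,
    hyT.eventually (lt_mem_nhds (inv_pos.mpr c2)), self_mem_nhdsWithin] with ε g1 g2 g3 g4
  have g4 : 0 < ε := g4
  have gM : 1 ≤ ⌈(s ε / ε) ^ (1 / b)⌉₊ := Nat.one_le_ceil_iff.mpr g2
  refine ⟨g1, gM, ?_⟩
  set M := ⌈(s ε / ε) ^ (1 / b)⌉₊ with hMdef
  have hy1 : y ε ≤ 1 := by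
    have : 0 ≤ (1 + a / b)⁻¹ * (1 + |e (nf ε)|) := by positivity
    simp only [hy]; linarith
  have hp1 := hφ1nn (nf ε)
  have hp2 := hφ2nn (M0 ε)
  have hsm : m ≤ s ε := by
    simp only [hs]
    rw [le_div_iff₀ g3]
    calc m * y ε ≤ m * 1 := by gcongr
      _ ≤ _ := by gcongr; linarith
  have hspos : 0 < s ε := hm.trans_le hsm
  have hM0M : M0 ε ≤ M := by
    apply Nat.ceil_mono
    gcongr
  have hφ := hanti hM0M
  have general : ∀ (c t : ℝ) (N : ℕ), 0 < c → 0 < t → (t / ε) ^ (1 / c) ≤ N →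
      (N : ℝ) ^ (-c) ≤ ε / t := by
    intro c t N hc ht hN
    have h0 : 0 < (t / ε) ^ (1 / c) := by positivity
    have := rpow_le_rpow_of_nonpos h0 hN (neg_nonpos.mpr hc.le)
    rw [← rpow_mul (by positivity), show 1 / c * -c = -1 by field_simp, rpow_neg_one, inv_div] at this
    exact this
  have b1 := general a _ (nf ε) ha hA (Nat.le_ceil _)
  have b2 := general b _ M hb hspos (Nat.le_ceil _)
  have t1 : μ * (nf ε : ℝ) ^ (-a) * (1 + |e (nf ε)|) ≤ ε * (1 - y ε) := by
    calc μ * (nf ε : ℝ) ^ (-a) * (1 + |e (nf ε)|)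
        ≤ μ * (ε / ((1 + a / b) * μ)) * (1 + |e (nf ε)|) := by gcongr
      _ = ε * (1 - y ε) := by simp only [hy]; field_simp; ring
  have t2 : m * (M : ℝ) ^ (-b) * (1 + φ1 (nf ε) + φ2 M) ≤ ε * y ε := by
    have := hφ2nn M
    calc m * (M : ℝ) ^ (-b) * (1 + φ1 (nf ε) + φ2 M)
        ≤ m * (ε / s ε) * (1 + φ1 (nf ε) + φ2 (M0 ε)) := by gcongr
      _ = ε * y ε := by
        have : 0 < 1 + φ1 (nf ε) + φ2 (M0 ε) := by linarith
        simp only [hs]; field_simp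
  linarith



/-- Asymptotically optimal computational cost of the multi-step Richardson–Romberg
stochastic approximation estimator of order `R`: with `Cost(n,M) = K M n R(R+1)/2`
and step `γ(p) = γ₀/p^β`, the infimum of the cost over `(n,M) ∈ (ℕ*)²` subject to
`μ_R n^{−αR}(1+|ε_{R+1}(n)|) + ν_R γ(M)^{1/2}(1+φ₁(n)+φ₂(M)) ≤ ε` is equivalent, as
`ε → 0⁺`, to
`K (R(R+1)/2) γ₀^{1/β} ν_R^{2/β} μ_R^{1/(αR)} ε^{−(2/β+1/(αR))}
  (1+2αR/β)^{1/(αR)} (1+β/(2αR))^{2/β}`,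
and this bound is achieved with parameters
`n(ε) ∼ (2αR/β+1)^{1/(αR)} μ_R^{1/(αR)} ε^{−1/(αR)}` and
`M(ε) ∼ γ₀^{1/β} ν_R^{2/β} (1+β/(2αR))^{2/β} ε^{−2/β}`. -/
theorem rr_cost_asymptotics (α : ℝ) (hα : 0 < α) (R : ℕ) (hR : 1 ≤ R)
    (β γ0 K μR νR : ℝ) (hβ1 : 1 / 2 < β) (hβ2 : β ≤ 1)
    (hγ0 : 0 < γ0) (hK : 0 < K) (hμ : 0 < μR) (hν : 0 < νR)
    (εR : ℕ → ℝ) (hεR : Tendsto εR atTop (𝓝 0))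
    (φ1 φ2 : ℕ → ℝ) (hφ1nn : ∀ n, 0 ≤ φ1 n) (hφ2nn : ∀ M, 0 ≤ φ2 M)
    (hφ1 : Tendsto φ1 atTop (𝓝 0)) (hφ2 : Tendsto φ2 atTop (𝓝 0))
    (hφ2anti : Antitone φ2)
    (constraint : ℕ → ℕ → ℝ → Prop)
    (hconstraint : ∀ n M ε, constraint n M ε ↔
      μR * (n : ℝ) ^ (-(α * (R : ℝ))) * (1 + |εR n|) +
          νR * Real.sqrt (γ0 / (M : ℝ) ^ β) * (1 + φ1 n + φ2 M) ≤ ε)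
    (cost : ℕ → ℕ → ℝ)
    (hcost : ∀ n M, cost n M = K * (M : ℝ) * (n : ℝ) * ((R : ℝ) * ((R : ℝ) + 1) / 2))
    (V : ℝ → ℝ)
    (hV : ∀ ε, V ε = sInf {c : ℝ | ∃ n M : ℕ, 1 ≤ n ∧ 1 ≤ M ∧
      constraint n M ε ∧ c = cost n M})
    (asymp : ℝ → ℝ)
    (hasymp : ∀ ε, asymp ε =
      K * ((R : ℝ) * ((R : ℝ) + 1) / 2) * γ0 ^ (1 / β) * νR ^ (2 / β) *
        μR ^ (1 / (α * (R : ℝ))) * ε ^ (-(2 / β + 1 / (α * (R : ℝ)))) *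
        (1 + 2 * α * (R : ℝ) / β) ^ (1 / (α * (R : ℝ))) *
        (1 + β / (2 * α * (R : ℝ))) ^ (2 / β)) :
    Tendsto (fun ε => V ε / asymp ε) (𝓝[>] (0 : ℝ)) (𝓝 1) ∧
      ∃ nf Mf : ℝ → ℕ,
        (∀ᶠ ε in 𝓝[>] (0 : ℝ), constraint (nf ε) (Mf ε) ε) ∧
        Tendsto (fun ε => (nf ε : ℝ) /
            ((2 * α * (R : ℝ) / β + 1) ^ (1 / (α * (R : ℝ))) *
              μR ^ (1 / (α * (R : ℝ))) * ε ^ (-(1 / (α * (R : ℝ))))))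
          (𝓝[>] (0 : ℝ)) (𝓝 1) ∧
        Tendsto (fun ε => (Mf ε : ℝ) /
            (γ0 ^ (1 / β) * νR ^ (2 / β) *
              (1 + β / (2 * α * (R : ℝ))) ^ (2 / β) * ε ^ (-(2 / β))))
          (𝓝[>] (0 : ℝ)) (𝓝 1) ∧
        Tendsto (fun ε => cost (nf ε) (Mf ε) / asymp ε) (𝓝[>] (0 : ℝ)) (𝓝 1) := by
  have hR' : (0 : ℝ) < R := by exact_mod_cast hR
  have hβ : 0 < β := by linarith
  obtain ⟨a, haR⟩ : ∃ a, a = α * (R : ℝ) := ⟨_, rfl⟩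
  obtain ⟨b, hbβ⟩ : ∃ b, b = β / 2 := ⟨_, rfl⟩
  obtain ⟨m, hmd⟩ : ∃ m, m = νR * √γ0 := ⟨_, rfl⟩
  have ha : 0 < a := by rw [haR]; positivity
  have hb : 0 < b := by rw [hbβ]; positivity
  have hm : 0 < m := by rw [hmd]; positivity
  have f1 : 2 * α * (R : ℝ) / β = a / b := by rw [haR, hbβ]; field_simp
  have f2 : β / (2 * α * (R : ℝ)) = b / a := by rw [haR, hbβ]; field_simp
  have f3 : 2 / β = 1 / b := by rw [hbβ]; field_simp
  have f4 : γ0 ^ (1 / β) * νR ^ (1 / b) = m ^ (1 / b) := by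
    rw [hmd, mul_rpow hν.le (sqrt_nonneg _), sqrt_eq_rpow, ← rpow_mul hγ0.le, mul_comm]
    congr 2
    rw [hbβ]; field_simp
  have c1 : 0 < 1 + a / b := by positivity
  have c2 : 0 < 1 + b / a := by positivity
  have gA : ((1 + a / b) * μR) ^ (1 / a) = (1 + a / b) ^ (1 / a) * μR ^ (1 / a) :=
    mul_rpow c1.le hμ.le
  have gB : ((1 + b / a) * m) ^ (1 / b) = (1 + b / a) ^ (1 / b) * m ^ (1 / b) :=
    mul_rpow c2.le hm.le
  have hcon : ∀ n M ε, 1 ≤ M → (constraint n M ε ↔ μR * (n : ℝ) ^ (-a) * (1 + |εR n|) +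
          m * (M : ℝ) ^ (-b) * (1 + φ1 n + φ2 M) ≤ ε) := by
    intro n M ε hM
    have hM' : (0 : ℝ) < M := by exact_mod_cast hM
    have : νR * √(γ0 / (M : ℝ) ^ β) = m * (M : ℝ) ^ (-b) := by
      rw [sqrt_div hγ0.le, sqrt_eq_rpow ((M : ℝ) ^ β), ← rpow_mul hM'.le, rpow_neg hM'.le, hmd,
        show β * (1 / 2) = b by rw [hbβ]; ring]
      ring
    rw [hconstraint, this, haR]
  simp only [← haR, f1, f2, f3] at hasymp ⊢
  set Q : ℝ := K * ((R : ℝ) * ((R : ℝ) + 1) / 2) with hQ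
  have hQp : 0 < Q := by positivity
  have has : ∀ ε, asymp ε = Q * (((1 + a / b) * μR) ^ (1 / a) * ((1 + b / a) * m) ^ (1 / b) *
      ε ^ (-(1 / b + 1 / a))) := by
    intro ε
    rw [hasymp, gA, gB, ← f4]; ring
  have hco : ∀ n M, cost n M = Q * ((n : ℝ) * M) := by
    intro n M; rw [hcost, hQ]; ring
  have hApos : 0 < ((1 + a / b) * μR) ^ (1 / a) := by positivity
  have hBpos : 0 < ((1 + b / a) * m) ^ (1 / b) := by positivity
  obtain ⟨nf, Mf, h1, h2, h3⟩ := rr_upper a b μR m ha hb hμ hm εR φ1 φ2 hεR hφ1nn hφ2nn hφ1 hφ2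
    hφ2anti
  have h4 : Tendsto (fun ε => cost (nf ε) (Mf ε) / asymp ε) (𝓝[>] (0 : ℝ)) (𝓝 1) := by
    have h5 := h2.mul h3
    rw [mul_one] at h5
    refine h5.congr' ?_
    filter_upwards [self_mem_nhdsWithin] with ε hε
    have hε : 0 < ε := hε
    rw [hco, has, mul_div_mul_left _ _ hQp.ne', div_mul_div_comm, neg_add, rpow_add hε]
    congr 1
    ring
  have hlow : ∀ ε, 0 < ε → ∀ n M : ℕ, 1 ≤ n → 1 ≤ M → constraint n M ε → asymp ε ≤ cost n M := by
    intro ε hε n M hn hM hc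
    rw [hcon n M ε hM] at hc
    have hn' : (0 : ℝ) < n := by exact_mod_cast hn
    have hM' : (0 : ℝ) < M := by exact_mod_cast hM
    rw [hco, has]
    refine mul_le_mul_of_nonneg_left ?_ hQp.le
    refine rr_lower a b μR m ε n M ha hb hμ hm hε hn' hM' (le_trans ?_ hc)
    have := hφ1nn n
    have := hφ2nn M
    refine add_le_add (le_mul_of_one_le_right (by positivity) ?_)
      (le_mul_of_one_le_right (by positivity) (by linarith))
    linarith [abs_nonneg (εR n)]
  refine ⟨?_, nf, Mf, ?_, ?_, ?_, h4⟩
  · refine tendsto_of_tendsto_of_tendsto_of_le_of_le' tendsto_const_nhds h4 ?_ ?_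
    · filter_upwards [h1, self_mem_nhdsWithin] with ε ⟨g1, g2, g3⟩ hε
      have hε : 0 < ε := hε
      have hap : 0 < asymp ε := by rw [has]; positivity
      rw [le_div_iff₀ hap, one_mul, hV]
      refine le_csInf ⟨_, nf ε, Mf ε, g1, g2, (hcon _ _ _ g2).mpr g3, rfl⟩ ?_
      rintro c ⟨n, M, hn, hM, hc, rfl⟩
      exact hlow ε hε n M hn hM hc
    · filter_upwards [h1, self_mem_nhdsWithin] with ε ⟨g1, g2, g3⟩ hε
      have hε : 0 < ε := hε
      have hap : 0 < asymp ε := by rw [has]; positivity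
      refine div_le_div_of_nonneg_right ?_ hap.le
      rw [hV]
      refine csInf_le ⟨asymp ε, ?_⟩ ⟨nf ε, Mf ε, g1, g2, (hcon _ _ _ g2).mpr g3, rfl⟩
      rintro c ⟨n, M, hn, hM, hc, rfl⟩
      exact hlow ε hε n M hn hM hc
  · filter_upwards [h1] with ε ⟨g1, g2, g3⟩
    exact (hcon _ _ _ g2).mpr g3
  · rw [gA] at h2
    rw [add_comm (a / b) 1]
    exact h2
  · rw [gB, mul_comm ((1 + b / a) ^ (1 / b))] at h3
    rw [f4]
    exact h3
end

section
/- For every ε > 0, the minimum of the function (n, M) ↦ K M n R(R+1)/2 over pairs of positive reals (n, M) subject to the constraint μ n^{−αR} + ν γ_0^{1/2} M^{−β/2} ≤ ε is attained at n(ε) = (2αR/β + 1)^{1/(αR)} μ^{1/(αR)} ε^{−1/(αR)} and M(ε) = γ_0^{1/β} ν^{2/β} (1 + β/(2αR))^{2/β} ε^{−2/β}, and the minimal value equals K · (R(R+1)/2) · γ_0^{1/β} ν^{2/β} μ^{1/(αR)} · ε^{−(2/β + 1/(αR))} · (1 + 2αR/β)^{1/(αR)} · (1 + β/(2αR))^{2/β}.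 -/
open Filter Finset Real

theorem cost_aux_min (a b x0 y0 c d n0 M0 n M : ℝ) (ha : 0 < a) (hb : 0 < b)
    (hc : 0 < c) (hd : 0 < d) (hn0 : 0 < n0) (hM0 : 0 < M0) (hn : 0 < n) (hM : 0 < M)
    (ε : ℝ) (hε : 0 < ε)
    (hx0 : x0 = ε * (b / (a + b))) (hy0 : y0 = ε * (a / (a + b)))
    (h1 : c * n0 ^ (-a) = x0) (h2 : d * M0 ^ (-b) = y0)
    (h : c * n ^ (-a) + d * M ^ (-b) ≤ ε) : M0 * n0 ≤ M * n := by
  have hx0p : 0 < x0 := by rw [hx0]; positivity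
  have hy0p : 0 < y0 := by rw [hy0]; positivity
  have hxp : 0 < c * n ^ (-a) := by positivity
  have hyp : 0 < d * M ^ (-b) := by positivity
  have l1 := Real.log_le_sub_one_of_pos (div_pos hxp hx0p)
  have l2 := Real.log_le_sub_one_of_pos (div_pos hyp hy0p)
  have e1 : Real.log (c * n ^ (-a) / x0) = -a * (Real.log n - Real.log n0) := by
    rw [← h1, Real.log_div (by positivity) (by positivity),
      Real.log_mul (by positivity) (by positivity), Real.log_mul (by positivity) (by positivity),
      Real.log_rpow hn, Real.log_rpow hn0]
    ring
  have e2 : Real.log (d * M ^ (-b) / y0) = -b * (Real.log M - Real.log M0) := by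
    rw [← h2, Real.log_div (by positivity) (by positivity),
      Real.log_mul (by positivity) (by positivity), Real.log_mul (by positivity) (by positivity),
      Real.log_rpow hM, Real.log_rpow hM0]
    ring
  rw [e1] at l1
  rw [e2] at l2
  have k : b * (c * n ^ (-a) / x0) + a * (d * M ^ (-b) / y0) ≤ a + b := by
    have : b * (c * n ^ (-a) / x0) + a * (d * M ^ (-b) / y0)
        = (a + b) * ((c * n ^ (-a) + d * M ^ (-b)) / ε) := by
      rw [hx0, hy0]; field_simp
    rw [this]
    have h3 : (c * n ^ (-a) + d * M ^ (-b)) / ε ≤ 1 := (div_le_one hε).2 h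
    nlinarith
  have m1 := mul_le_mul_of_nonneg_left l1 hb.le
  have m2 := mul_le_mul_of_nonneg_left l2 ha.le
  have m3 : 0 ≤ (a * b) * (Real.log M + Real.log n - (Real.log M0 + Real.log n0)) := by
    nlinarith
  have m4 := nonneg_of_mul_nonneg_right m3 (mul_pos ha hb)
  rw [← Real.log_le_log_iff (by positivity) (by positivity), Real.log_mul hM0.ne' hn0.ne',
    Real.log_mul hM.ne' hn.ne']
  linarith

/-- Explicit solution of the (relaxed) computational-cost optimization problem:
for every `ε > 0`, the minimum of `(n, M) ↦ K·M·n·R(R+1)/2` over positive reals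
`(n, M)` subject to `μ n^{−αR} + ν γ₀^{1/2} M^{−β/2} ≤ ε` is attained at
`n(ε) = (2αR/β + 1)^{1/(αR)} μ^{1/(αR)} ε^{−1/(αR)}` and
`M(ε) = γ₀^{1/β} ν^{2/β} (1 + β/(2αR))^{2/β} ε^{−2/β}`, with minimal value
`K (R(R+1)/2) γ₀^{1/β} ν^{2/β} μ^{1/(αR)} ε^{−(2/β+1/(αR))}
  (1+2αR/β)^{1/(αR)} (1+β/(2αR))^{2/β}`. -/
theorem cost_optimization_explicit_solution
    (α : ℝ) (hα : 0 < α) (R : ℕ) (hR : 1 ≤ R)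
    (β : ℝ) (hβ1 : 1 / 2 < β) (hβ2 : β ≤ 1)
    (K μ ν γ0 : ℝ) (hK : 0 < K) (hμ : 0 < μ) (hν : 0 < ν) (hγ0 : 0 < γ0)
    (ε : ℝ) (hε : 0 < ε)
    (cost : ℝ → ℝ → ℝ) (hcost : ∀ n M, cost n M = K * M * n * ((R : ℝ) * ((R : ℝ) + 1) / 2))
    (S : Set (ℝ × ℝ))
    (hS : S = {q : ℝ × ℝ | 0 < q.1 ∧ 0 < q.2 ∧
      μ * q.1 ^ (-(α * (R : ℝ))) + ν * γ0 ^ ((1 : ℝ) / 2) * q.2 ^ (-(β / 2)) ≤ ε})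
    (nε Mε : ℝ)
    (hn : nε = (2 * α * (R : ℝ) / β + 1) ^ (1 / (α * (R : ℝ))) * μ ^ (1 / (α * (R : ℝ))) *
      ε ^ (-(1 / (α * (R : ℝ)))))
    (hM : Mε = γ0 ^ (1 / β) * ν ^ (2 / β) * (1 + β / (2 * α * (R : ℝ))) ^ (2 / β) *
      ε ^ (-(2 / β))) :
    (nε, Mε) ∈ S ∧ (∀ q ∈ S, cost nε Mε ≤ cost q.1 q.2) ∧
      cost nε Mε =
        K * ((R : ℝ) * ((R : ℝ) + 1) / 2) * γ0 ^ (1 / β) * ν ^ (2 / β) *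
          μ ^ (1 / (α * (R : ℝ))) * ε ^ (-(2 / β + 1 / (α * (R : ℝ)))) *
          (1 + 2 * α * (R : ℝ) / β) ^ (1 / (α * (R : ℝ))) *
          (1 + β / (2 * α * (R : ℝ))) ^ (2 / β) := by
  have hRp : (0 : ℝ) < R := by exact_mod_cast hR
  have hβ : 0 < β := by linarith
  obtain ⟨a, hadef⟩ : ∃ a, a = α * (R : ℝ) := ⟨_, rfl⟩
  have ha : 0 < a := by rw [hadef]; positivity
  have e2a : 2 * α * (R : ℝ) = 2 * a := by rw [hadef]; ring
  rw [e2a] at hn hM ⊢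
  rw [← hadef] at hS hn ⊢
  have hnp : 0 < nε := by rw [hn]; positivity
  have hMp : 0 < Mε := by rw [hM]; positivity
  have hn' : nε = ((2 * a / β + 1) * μ * ε⁻¹) ^ (1 / a) := by
    rw [hn, Real.mul_rpow (by positivity) (by positivity),
      Real.mul_rpow (by positivity) (by positivity), Real.inv_rpow hε.le, Real.rpow_neg hε.le]
  have hM' : Mε = (γ0 ^ ((1 : ℝ) / 2) * ν * (1 + β / (2 * a)) * ε⁻¹) ^ (2 / β) := by
    rw [hM, Real.mul_rpow (by positivity) (by positivity),
      Real.mul_rpow (by positivity) (by positivity),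
      Real.mul_rpow (by positivity) (by positivity), Real.inv_rpow hε.le, Real.rpow_neg hε.le,
      ← Real.rpow_mul hγ0.le]
    congr 4
    field_simp
  have h1 : μ * nε ^ (-a) = ε * ((β / 2) / (a + β / 2)) := by
    rw [hn', ← Real.rpow_mul (by positivity), show 1 / a * (-a) = -1 by field_simp,
      Real.rpow_neg_one]
    field_simp
  have h2 : ν * γ0 ^ ((1 : ℝ) / 2) * Mε ^ (-(β / 2)) = ε * (a / (a + β / 2)) := by
    rw [hM', ← Real.rpow_mul (by positivity), show 2 / β * (-(β / 2)) = -1 by field_simp,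
      Real.rpow_neg_one]
    have : 0 < γ0 ^ ((1 : ℝ) / 2) := by positivity
    generalize γ0 ^ ((1 : ℝ) / 2) = g at *
    field_simp
  subst hS
  refine ⟨⟨hnp, hMp, ?_⟩, ?_, ?_⟩
  · simp only
    rw [h1, h2]
    apply le_of_eq
    field_simp
    ring
  · rintro ⟨n, M⟩ ⟨q1, q2, q3⟩
    have key := cost_aux_min a (β / 2) _ _ μ (ν * γ0 ^ ((1 : ℝ) / 2)) nε Mε n M ha (by positivity)
      hμ (by positivity) hnp hMp q1 q2 ε hε rfl rfl h1 h2 q3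
    rw [hcost, hcost]
    simp only
    rw [mul_assoc K Mε, mul_assoc K M]
    gcongr
  · rw [hcost, hn, hM, neg_add, Real.rpow_add hε, add_comm (2 * a / β) 1]
    ring
end

section
/- Let Cost(n, M) = K M n. Then, as ε → 0, inf { Cost(n, M) : (n, M) ∈ (ℕ*)², c_1 n^{−α}(1 + |ε_1(n)|) + ν_1 γ(M)^{1/2}(1 + φ_1(n) + φ_2(M)) ≤ ε } is asymptotically equivalent to K γ_0^{1/β} ν_1^{2/β} c_1^{1/α} · ε^{−(2/β + 1/α)} · (1 + 2α/β)^{1/α} · (1 + β/(2α))^{2/β}. Moreover this asymptotic bound may be achieved with parameters n(ε) ∼ (2α/β + 1)^{1/α} c_1^{1/α} ε^{−1/α} and M(ε) ∼ γ_0^{1/β} ν_1^{2/β} (1 + β/(2α))^{2/β} ε^{−2/β}. -/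
open Filter Topology Real

lemma aux_le {C s e n : ℝ} (hC : 0 < C) (hs : 0 < s) (he : 0 < e)
    (h : (C / e) ^ (1 / s) ≤ n) : C * n ^ (-s) ≤ e := by
  have h0 : 0 < (C / e) ^ (1 / s) := by positivity
  have hn : 0 < n := lt_of_lt_of_le h0 h
  have h1 : C / e ≤ n ^ s := by
    have := Real.rpow_le_rpow h0.le h hs.le
    rwa [← Real.rpow_mul (by positivity), one_div_mul_cancel hs.ne', Real.rpow_one] at this
  have h2 : 0 < n ^ s := by positivity
  rw [Real.rpow_neg hn.le, ← div_eq_mul_inv, div_le_iff₀ h2]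
  rw [div_le_iff₀ he] at h1
  linarith

/-- weighted AM-GM in the form needed -/
lemma aux_amgm {a b X Y : ℝ} (ha : 0 < a) (hb : 0 < b) (hX : 0 < X) (hY : 0 < Y)
    (h : a / (a + b) * X + b / (a + b) * Y ≤ 1) : X ^ a * Y ^ b ≤ 1 := by
  have hab : 0 < a + b := by positivity
  have h1 := Real.geom_mean_le_arith_mean2_weighted (w₁ := a / (a + b)) (w₂ := b / (a + b))
    (by positivity) (by positivity) hX.le hY.le (by field_simp)
  have h2 : (X ^ (a / (a + b)) * Y ^ (b / (a + b))) ^ (a + b) ≤ 1 :=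
    Real.rpow_le_one (by positivity) (h1.trans h) hab.le
  rwa [Real.mul_rpow (by positivity) (by positivity), ← Real.rpow_mul hX.le,
    ← Real.rpow_mul hY.le, div_mul_cancel₀ _ hab.ne', div_mul_cancel₀ _ hab.ne'] at h2

lemma aux_scale {P C s ε n : ℝ} (hP : 0 < P) (hC : 0 < C) (hs : 0 < s) (hε : 0 < ε)
    (hn : 0 < n) : (P * C / ε) ^ (1 / s) = n * (P * (C * n ^ (-s)) / ε) ^ (1 / s) := by
  have h : P * (C * n ^ (-s)) / ε = (P * C / ε) * n ^ (-s) := by ring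
  rw [h, Real.mul_rpow (by positivity) (by positivity), ← Real.rpow_mul hn.le]
  have : -s * (1 / s) = -1 := by field_simp
  rw [this, Real.rpow_neg_one]
  field_simp

lemma aux_sqrt {γ0 M β : ℝ} (hγ : 0 < γ0) (hM : 0 ≤ M) :
    Real.sqrt (γ0 / M ^ β) = Real.sqrt γ0 * M ^ (-(β / 2)) := by
  rw [Real.sqrt_div hγ.le, Real.rpow_neg hM, Real.sqrt_eq_rpow (M ^ β), ← Real.rpow_mul hM,
    div_eq_mul_inv]
  congr 3
  ring

lemma aux_tendsto {A a : ℝ} (hA : 0 < A) (ha : 0 < a) :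
    Tendsto (fun ε : ℝ => (A / ε) ^ a) (𝓝[>] (0 : ℝ)) atTop := by
  refine (tendsto_rpow_atTop ha).comp ?_
  have h := (tendsto_inv_nhdsGT_zero (𝕜 := ℝ)).const_mul_atTop hA
  exact h.congr fun x => (div_eq_mul_inv A x).symm

/-- Asymptotically optimal computational cost of the crude stochastic approximation
estimator: with `Cost(n,M) = K M n` and step `γ(p) = γ₀/p^β`, the infimum of the
cost over `(n,M) ∈ (ℕ*)²` subject to
`c₁ n^{−α}(1+|ε₁(n)|) + ν₁ γ(M)^{1/2}(1+φ₁(n)+φ₂(M)) ≤ ε` is equivalent, as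
`ε → 0⁺`, to `K γ₀^{1/β} ν₁^{2/β} c₁^{1/α} ε^{−(2/β+1/α)} (1+2α/β)^{1/α}
(1+β/(2α))^{2/β}`, and this bound is achieved with parameters
`n(ε) ∼ (2α/β+1)^{1/α} c₁^{1/α} ε^{−1/α}` and
`M(ε) ∼ γ₀^{1/β} ν₁^{2/β} (1+β/(2α))^{2/β} ε^{−2/β}`. -/
theorem crude_sa_cost_asymptotics (α : ℝ) (hα : 0 < α)
    (β γ0 K c1 ν1 : ℝ) (hβ1 : 1 / 2 < β) (hβ2 : β ≤ 1)
    (hγ0 : 0 < γ0) (hK : 0 < K) (hc1 : 0 < c1) (hν1 : 0 < ν1)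
    (ε1 : ℕ → ℝ) (hε1 : Tendsto ε1 atTop (𝓝 0))
    (φ1 φ2 : ℕ → ℝ) (hφ1nn : ∀ n, 0 ≤ φ1 n) (hφ2nn : ∀ M, 0 ≤ φ2 M)
    (hφ1 : Tendsto φ1 atTop (𝓝 0)) (hφ2 : Tendsto φ2 atTop (𝓝 0))
    (hφ2anti : Antitone φ2)
    (constraint : ℕ → ℕ → ℝ → Prop)
    (hconstraint : ∀ n M ε, constraint n M ε ↔
      c1 * (n : ℝ) ^ (-α) * (1 + |ε1 n|) +
          ν1 * Real.sqrt (γ0 / (M : ℝ) ^ β) * (1 + φ1 n + φ2 M) ≤ ε)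
    (cost : ℕ → ℕ → ℝ) (hcost : ∀ n M, cost n M = K * (M : ℝ) * (n : ℝ))
    (V : ℝ → ℝ)
    (hV : ∀ ε, V ε = sInf {c : ℝ | ∃ n M : ℕ, 1 ≤ n ∧ 1 ≤ M ∧
      constraint n M ε ∧ c = cost n M})
    (asymp : ℝ → ℝ)
    (hasymp : ∀ ε, asymp ε =
      K * γ0 ^ (1 / β) * ν1 ^ (2 / β) * c1 ^ (1 / α) *
        ε ^ (-(2 / β + 1 / α)) * (1 + 2 * α / β) ^ (1 / α) *
        (1 + β / (2 * α)) ^ (2 / β)) :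
    Tendsto (fun ε => V ε / asymp ε) (𝓝[>] (0 : ℝ)) (𝓝 1) ∧
      ∃ nf Mf : ℝ → ℕ,
        (∀ᶠ ε in 𝓝[>] (0 : ℝ), constraint (nf ε) (Mf ε) ε) ∧
        Tendsto (fun ε => (nf ε : ℝ) /
            ((2 * α / β + 1) ^ (1 / α) * c1 ^ (1 / α) * ε ^ (-(1 / α))))
          (𝓝[>] (0 : ℝ)) (𝓝 1) ∧
        Tendsto (fun ε => (Mf ε : ℝ) /
            (γ0 ^ (1 / β) * ν1 ^ (2 / β) * (1 + β / (2 * α)) ^ (2 / β) *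
              ε ^ (-(2 / β))))
          (𝓝[>] (0 : ℝ)) (𝓝 1) ∧
        Tendsto (fun ε => cost (nf ε) (Mf ε) / asymp ε) (𝓝[>] (0 : ℝ)) (𝓝 1) := by
  have hβ : 0 < β := by linarith
  set D : ℝ := ν1 * Real.sqrt γ0 with hD
  have hDpos : 0 < D := by positivity
  set P : ℝ := 2 * α / β + 1 with hP
  set Q : ℝ := 1 + β / (2 * α) with hQ
  have hPpos : 0 < P := by positivity
  have hQpos : 0 < Q := by positivity
  have hPQ : 1 / P + 1 / Q = 1 := by
    rw [hP, hQ]; field_simp; ring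
  set κ : ℝ := β / 2 with hκ
  have hκpos : 0 < κ := by positivity
  have h2β : 2 / β = 1 / κ := by rw [hκ]; field_simp
  have hPe : 1 / α / (1 / α + 1 / κ) = 1 / P := by
    rw [hκ, hP]; field_simp; ring
  have hQe : 1 / κ / (1 / α + 1 / κ) = 1 / Q := by
    rw [hκ, hQ]; field_simp; ring
  have hDκ : D ^ (1 / κ) = γ0 ^ (1 / β) * ν1 ^ (2 / β) := by
    rw [hD, Real.mul_rpow hν1.le (Real.sqrt_nonneg _), Real.sqrt_eq_rpow, ← Real.rpow_mul hγ0.le,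
      h2β, mul_comm]
    congr 2
    rw [hκ]; field_simp
  have hN0 : ∀ ε : ℝ, 0 < ε → P ^ (1 / α) * c1 ^ (1 / α) * ε ^ (-(1 / α)) =
      (P * c1 / ε) ^ (1 / α) := by
    intro ε hε
    rw [Real.div_rpow (by positivity) hε.le, Real.mul_rpow hPpos.le hc1.le,
      Real.rpow_neg hε.le]
    exact (div_eq_mul_inv _ _).symm
  have hM0 : ∀ ε : ℝ, 0 < ε → γ0 ^ (1 / β) * ν1 ^ (2 / β) * Q ^ (2 / β) * ε ^ (-(2 / β)) =
      (Q * D / ε) ^ (1 / κ) := by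
    intro ε hε
    rw [Real.div_rpow (by positivity) hε.le, Real.mul_rpow hQpos.le hDpos.le, hDκ, h2β,
      Real.rpow_neg hε.le, div_eq_mul_inv]
    ring
  have has : ∀ ε : ℝ, 0 < ε →
      asymp ε = K * (Q * D / ε) ^ (1 / κ) * (P * c1 / ε) ^ (1 / α) := by
    intro ε hε
    rw [hasymp, ← hN0 ε hε, ← hM0 ε hε, neg_add, Real.rpow_add hε,
      show 1 + 2 * α / β = P by rw [hP]; ring]
    ring
  have hcon : ∀ (n M : ℕ) ε, constraint n M ε ↔
      c1 * (n : ℝ) ^ (-α) * (1 + |ε1 n|) + D * (M : ℝ) ^ (-κ) * (1 + φ1 n + φ2 M) ≤ ε := by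
    intro n M ε
    rw [hconstraint, aux_sqrt hγ0 (Nat.cast_nonneg M), hD, hκ, ← mul_assoc ν1]
  -- lower bound
  have hlow : ∀ (n M : ℕ) ε, 0 < ε → 1 ≤ n → 1 ≤ M → constraint n M ε →
      asymp ε ≤ cost n M := by
    intro n M ε hε hn hM hc
    rw [hcon] at hc
    have hn' : (0 : ℝ) < n := by exact_mod_cast hn
    have hM' : (0 : ℝ) < M := by exact_mod_cast hM
    have hx : 0 < c1 * (n : ℝ) ^ (-α) := by positivity
    have hy : 0 < D * (M : ℝ) ^ (-κ) := by positivity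
    have hs : c1 * (n : ℝ) ^ (-α) + D * (M : ℝ) ^ (-κ) ≤ ε := by
      have h1 := mul_nonneg hx.le (abs_nonneg (ε1 n))
      have h2 := mul_nonneg hy.le (add_nonneg (hφ1nn n) (hφ2nn M))
      linarith
    rw [has ε hε, hcost, aux_scale hPpos hc1 hα hε hn', aux_scale hQpos hDpos hκpos hε hM']
    have key := aux_amgm (a := 1 / α) (b := 1 / κ) (X := P * (c1 * (n : ℝ) ^ (-α)) / ε)
      (Y := Q * (D * (M : ℝ) ^ (-κ)) / ε) (by positivity) (by positivity) (by positivity)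
      (by positivity) (by
        rw [hPe, hQe]
        have : 1 / P * (P * (c1 * (n : ℝ) ^ (-α)) / ε) + 1 / Q * (Q * (D * (M : ℝ) ^ (-κ)) / ε)
          = (c1 * (n : ℝ) ^ (-α) + D * (M : ℝ) ^ (-κ)) / ε := by field_simp
        rw [this, div_le_one hε]
        exact hs)
    have := mul_le_mul_of_nonneg_left key (show 0 ≤ K * (M : ℝ) * n by positivity)
    linarith
  -- construction
  have tN := aux_tendsto (A := P * c1) (a := 1 / α) (by positivity) (by positivity)
  have tM := aux_tendsto (A := Q * D) (a := 1 / κ) (by positivity) (by positivity)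
  set N0 : ℝ → ℝ := fun ε => (P * c1 / ε) ^ (1 / α) with hN0d
  set M0 : ℝ → ℝ := fun ε => (Q * D / ε) ^ (1 / κ) with hM0d
  set nf : ℝ → ℕ := fun ε => ⌈N0 ε⌉₊ with hnf
  have tnf : Tendsto nf (𝓝[>] (0 : ℝ)) atTop := tendsto_nat_ceil_atTop.comp tN
  have tmf : Tendsto (fun ε => ⌈M0 ε⌉₊) (𝓝[>] (0 : ℝ)) atTop := tendsto_nat_ceil_atTop.comp tM
  set u : ℝ → ℝ := fun ε => |ε1 (nf ε)| with hu
  set v : ℝ → ℝ := fun ε => φ1 (nf ε) + φ2 ⌈M0 ε⌉₊ with hv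
  have tu : Tendsto u (𝓝[>] (0 : ℝ)) (𝓝 0) := by
    have := (hε1.comp tnf).abs
    simpa using this
  have tv : Tendsto v (𝓝[>] (0 : ℝ)) (𝓝 0) := by
    have := (hφ1.comp tnf).add (hφ2.comp tmf)
    simpa using this
  have tden : Tendsto (fun ε => 1 / Q - 1 / P * u ε) (𝓝[>] (0 : ℝ)) (𝓝 (1 / Q)) := by
    have := (tu.const_mul (1 / P)).const_sub (1 / Q)
    simpa using this
  set r : ℝ → ℝ := fun ε => (1 + v ε) * (1 / Q) / (1 / Q - 1 / P * u ε) with hr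
  have tr : Tendsto r (𝓝[>] (0 : ℝ)) (𝓝 1) := by
    have := ((tv.const_add 1).mul_const (1 / Q)).div tden (by positivity)
    have e : (1 + 0) * (1 / Q) / (1 / Q) = 1 := by field_simp; ring
    rwa [e] at this
  have trb : Tendsto (fun ε => r ε ^ (1 / κ)) (𝓝[>] (0 : ℝ)) (𝓝 1) := by
    have := tr.rpow_const (p := 1 / κ) (Or.inl one_ne_zero)
    simpa using this
  set Mf : ℝ → ℕ := fun ε => ⌈M0 ε * r ε ^ (1 / κ)⌉₊ with hMf
  have hpos : ∀ᶠ ε in 𝓝[>] (0 : ℝ), 0 < ε := eventually_mem_nhdsWithin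
  have hden : ∀ᶠ ε in 𝓝[>] (0 : ℝ), 0 < 1 / Q - 1 / P * u ε :=
    tden.eventually (lt_mem_nhds (by positivity))
  have hall : ∀ᶠ ε in 𝓝[>] (0 : ℝ), 1 ≤ nf ε ∧ 1 ≤ Mf ε ∧ constraint (nf ε) (Mf ε) ε := by
    filter_upwards [hpos, hden] with ε hε hd
    have hu0 : 0 ≤ u ε := abs_nonneg _
    have hv0 : 0 ≤ v ε := add_nonneg (hφ1nn _) (hφ2nn _)
    have hr1 : 1 ≤ r ε := by
      rw [hr]
      simp only
      rw [le_div_iff₀ hd]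
      have : 0 ≤ 1 / P * u ε := by positivity
      have : 0 ≤ v ε * (1 / Q) := by positivity
      linarith
    have hrp : 0 < r ε := by linarith
    have hN0p : 0 < N0 ε := by rw [hN0d]; positivity
    have hM0p : 0 < M0 ε := by rw [hM0d]; positivity
    have hrb : 1 ≤ r ε ^ (1 / κ) := Real.one_le_rpow hr1 (by positivity)
    have hMle : ⌈M0 ε⌉₊ ≤ Mf ε := Nat.ceil_mono (le_mul_of_one_le_right hM0p.le hrb)
    refine ⟨Nat.ceil_pos.2 hN0p, le_trans (Nat.ceil_pos.2 hM0p) hMle, ?_⟩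
    rw [hcon]
    have h1 : c1 * (nf ε : ℝ) ^ (-α) ≤ ε / P := by
      apply aux_le hc1 hα (by positivity)
      have : c1 / (ε / P) = P * c1 / ε := by field_simp
      rw [this]
      exact Nat.le_ceil _
    have h2 : D * (Mf ε : ℝ) ^ (-κ) ≤ ε / Q / r ε := by
      apply aux_le hDpos hκpos (by positivity)
      have : D / (ε / Q / r ε) = Q * D / ε * r ε := by field_simp
      rw [this, Real.mul_rpow (by positivity) hrp.le]
      exact Nat.le_ceil _
    have h3 : 1 + φ1 (nf ε) + φ2 (Mf ε) ≤ 1 + v ε := by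
      have := hφ2anti hMle
      simp only [hv]
      linarith
    have h4 : c1 * (nf ε : ℝ) ^ (-α) * (1 + u ε) ≤ ε / P * (1 + u ε) :=
      mul_le_mul_of_nonneg_right h1 (by linarith)
    have h5 : D * (Mf ε : ℝ) ^ (-κ) * (1 + φ1 (nf ε) + φ2 (Mf ε)) ≤ ε / Q / r ε * (1 + v ε) := by
      refine mul_le_mul h2 h3 ?_ (by positivity)
      have := hφ1nn (nf ε)
      have := hφ2nn (Mf ε)
      linarith
    have h6 : ε / Q / r ε * (1 + v ε) = ε * (1 / Q - 1 / P * u ε) := by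
      have hv1 : 1 + v ε ≠ 0 := by positivity
      have hd' := hd.ne'
      have e : r ε * (1 / Q - 1 / P * u ε) = (1 + v ε) * (1 / Q) := by
        rw [hr]; simp only; rw [div_mul_cancel₀ _ hd']
      rw [div_mul_eq_mul_div, div_eq_iff hrp.ne']
      linear_combination (-ε) * e
    have h7 : ε / P * (1 + u ε) + ε * (1 / Q - 1 / P * u ε) = ε := by
      linear_combination ε * hPQ
    have h8 : c1 * (nf ε : ℝ) ^ (-α) * (1 + |ε1 (nf ε)|) ≤ ε / P * (1 + u ε) := h4
    linarith
  have tn1 : Tendsto (fun ε => (nf ε : ℝ) / N0 ε) (𝓝[>] (0 : ℝ)) (𝓝 1) :=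
    (tendsto_nat_ceil_div_atTop (R := ℝ)).comp tN
  have tM1 : Tendsto (fun ε => (Mf ε : ℝ) / M0 ε) (𝓝[>] (0 : ℝ)) (𝓝 1) := by
    have t1 : Tendsto (fun ε => M0 ε * r ε ^ (1 / κ)) (𝓝[>] (0 : ℝ)) atTop :=
      tM.atTop_mul_pos one_pos trb
    have t2 := ((tendsto_nat_ceil_div_atTop (R := ℝ)).comp t1).mul trb
    rw [mul_one] at t2
    refine t2.congr' ?_
    filter_upwards [hpos, tr.eventually (lt_mem_nhds one_pos)] with ε hε hrp
    have hM0p : 0 < M0 ε := by rw [hM0d]; positivity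
    have : 0 < r ε ^ (1 / κ) := by positivity
    simp only [Function.comp, hMf]
    field_simp
  have tc : Tendsto (fun ε => cost (nf ε) (Mf ε) / asymp ε) (𝓝[>] (0 : ℝ)) (𝓝 1) := by
    have := tM1.mul tn1
    rw [mul_one] at this
    refine this.congr' ?_
    filter_upwards [hpos] with ε hε
    have hN0p : 0 < N0 ε := by rw [hN0d]; positivity
    have hM0p : 0 < M0 ε := by rw [hM0d]; positivity
    have e : asymp ε = K * M0 ε * N0 ε := has ε hε
    rw [hcost, e]
    field_simp
  refine ⟨?_, nf, Mf, ?_, ?_, ?_, tc⟩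
  · refine tendsto_of_tendsto_of_tendsto_of_le_of_le' tendsto_const_nhds tc ?_ ?_
    · filter_upwards [hpos, hall] with ε hε ⟨h1, h2, h3⟩
      have hap : 0 < asymp ε := by rw [has ε hε]; positivity
      rw [le_div_iff₀ hap, one_mul, hV]
      refine le_csInf ⟨_, nf ε, Mf ε, h1, h2, h3, rfl⟩ ?_
      rintro c ⟨n, M, hn, hM, hc, rfl⟩
      exact hlow n M ε hε hn hM hc
    · filter_upwards [hpos, hall] with ε hε ⟨h1, h2, h3⟩
      have hap : 0 < asymp ε := by rw [has ε hε]; positivity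
      refine div_le_div_of_nonneg_right ?_ hap.le
      rw [hV]
      refine csInf_le ⟨0, ?_⟩ ⟨nf ε, Mf ε, h1, h2, h3, rfl⟩
      rintro c ⟨n, M, hn, hM, hc, rfl⟩
      rw [hcost]
      positivity
  · filter_upwards [hall] with ε h using h.2.2
  · refine tn1.congr' ?_
    filter_upwards [hpos] with ε hε
    rw [hN0 ε hε]
  · refine tM1.congr' ?_
    filter_upwards [hpos] with ε hε
    rw [hM0 ε hε]
end

section
/- For every α ∈ (0, 2], dimension d ≥ 1, T > 0 and K_1, K_2 > 0, there exist constants K > 0 and C > 0 such that for all t ∈ (0, T], all τ ∈ (0, t) and all x, y ∈ ℝ^d: ∫_{ℝ^d} p̄^α_{K_1}(τ, x, z) · p̄^α_{K_2}(t − τ, z, y) dz ≤ C p̄^α_K(t, x, y). -/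
open Filter Real MeasureTheory

/-- The stable/Gaussian-type density bound `p̄^α_K`:
for `α ∈ (0,2)`, `p̄^α_K(t,x,y) = t^{−d/α} / ( max(K, |y−x|/t^{1/α}) )^{d+α}`,
and for `α = 2`, `p̄^2_K(t,x,y) = t^{−d/2} exp(−K |y−x|²/t)`. -/
noncomputable def pbar (α K : ℝ) (d : ℕ) (t : ℝ)
    (x y : EuclideanSpace ℝ (Fin d)) : ℝ :=
  if α = 2 then t ^ (-(d : ℝ) / 2) * Real.exp (-K * ‖y - x‖ ^ 2 / t)
  else t ^ (-(d : ℝ) / α) / (max K (‖y - x‖ / t ^ (1 / α))) ^ ((d : ℝ) + α)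

theorem pbar_nonneg {α K : ℝ} {d : ℕ} {t : ℝ} (hK : 0 < K) (ht : 0 < t)
    (x y : EuclideanSpace ℝ (Fin d)) : 0 ≤ pbar α K d t x y := by
  unfold pbar
  split_ifs
  · positivity
  · have : 0 < max K (‖y - x‖ / t ^ (1 / α)) := lt_max_of_lt_left hK
    positivity

theorem pbar_comm (α K : ℝ) (d : ℕ) (t : ℝ)
    (x y : EuclideanSpace ℝ (Fin d)) : pbar α K d t x y = pbar α K d t y x := by
  unfold pbar
  rw [norm_sub_rev]

theorem pbar_scale {α K : ℝ} {d : ℕ} {t : ℝ} (hα : 0 < α) (ht : 0 < t)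
    (x z : EuclideanSpace ℝ (Fin d)) :
    pbar α K d t x z = ((t ^ (1 / α)) ^ d)⁻¹ * pbar α K d 1 0 ((t ^ (1 / α))⁻¹ • (z - x)) := by
  have hR : 0 < t ^ (1 / α) := by positivity
  have h1 : ((t ^ (1 / α)) ^ d)⁻¹ = t ^ (-(d : ℝ) / α) := by
    rw [← Real.rpow_natCast, ← Real.rpow_mul ht.le, ← Real.rpow_neg ht.le]
    congr 1; ring
  have h2 : ‖(t ^ (1 / α))⁻¹ • (z - x)‖ = ‖z - x‖ / t ^ (1 / α) := by
    rw [norm_smul, norm_inv, Real.norm_of_nonneg hR.le]; ring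
  unfold pbar
  rw [h1, sub_zero, h2]
  split_ifs with h
  · subst h
    have h3 : (t ^ (1 / (2:ℝ))) ^ 2 = t := by
      rw [← Real.rpow_natCast, ← Real.rpow_mul ht.le]; norm_num
    rw [div_pow, h3, Real.one_rpow]
    congr 1
    rw [one_mul]; congr 1; ring
  · simp only [Real.one_rpow, div_one]
    ring

theorem pbar_integrable_one {α K : ℝ} {d : ℕ} (hα : 0 < α) (hK : 0 < K) :
    Integrable (fun u : EuclideanSpace ℝ (Fin d) => pbar α K d 1 0 u) := by
  unfold pbar
  split_ifs with h
  · have := GaussianFourier.integrable_cexp_neg_mul_sq_norm_add (V := EuclideanSpace ℝ (Fin d))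
      (b := (K : ℂ)) (by simpa using hK) 0 0
    have h2 := this.norm
    refine h2.congr (Filter.Eventually.of_forall fun u => ?_)
    simp only [Complex.norm_exp, sub_zero, Real.one_rpow, div_one, one_mul]
    congr 1
    rw [zero_mul, add_zero, ← Complex.ofReal_pow, ← Complex.ofReal_neg, ← Complex.ofReal_mul,
      Complex.ofReal_re]
  · have hr : (Module.finrank ℝ (EuclideanSpace ℝ (Fin d)) : ℝ) < (d : ℝ) + α := by
      simp [hα]
    have hI := (integrable_one_add_norm (μ := (volume : Measure (EuclideanSpace ℝ (Fin d))))
      hr).const_mul ((min K 1 / 2) ^ (-((d : ℝ) + α)))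
    refine hI.mono' ?_ (Filter.Eventually.of_forall fun u => ?_)
    · apply Measurable.aestronglyMeasurable
      fun_prop
    · have hm : 0 < max K ‖u‖ := lt_max_of_lt_left hK
      have hc : 0 < min K 1 / 2 := by positivity
      have hle : min K 1 / 2 * (1 + ‖u‖) ≤ max K ‖u‖ := by
        have a1 := min_le_left K 1
        have a2 := min_le_right K 1
        have b1 := le_max_left K ‖u‖
        have b2 := le_max_right K ‖u‖
        nlinarith [norm_nonneg u]
      have hn : (0:ℝ) ≤ 1 + ‖u‖ := by positivity
      simp only [sub_zero, Real.one_rpow, div_one, one_div]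
      rw [Real.norm_of_nonneg (by positivity), ← Real.rpow_neg hm.le, ← Real.mul_rpow hc.le hn]
      apply Real.rpow_le_rpow_of_nonpos (by positivity) hle
      have : (0:ℝ) ≤ d := by positivity
      linarith

theorem pbar_integrable {α K : ℝ} {d : ℕ} {t : ℝ} (hα : 0 < α) (hK : 0 < K) (ht : 0 < t)
    (x : EuclideanSpace ℝ (Fin d)) :
    Integrable (fun z : EuclideanSpace ℝ (Fin d) => pbar α K d t x z) := by
  have hR : 0 < t ^ (1 / α) := by positivity
  have h := (((pbar_integrable_one (d := d) hα hK).comp_smul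
    (inv_ne_zero hR.ne')).comp_sub_right x).const_mul (((t ^ (1 / α)) ^ d)⁻¹)
  exact h.congr (Filter.Eventually.of_forall fun z => (pbar_scale hα ht x z).symm)

theorem pbar_integral {α K : ℝ} {d : ℕ} {t : ℝ} (hα : 0 < α) (ht : 0 < t)
    (x : EuclideanSpace ℝ (Fin d)) :
    ∫ z : EuclideanSpace ℝ (Fin d), pbar α K d t x z
      = ∫ u : EuclideanSpace ℝ (Fin d), pbar α K d 1 0 u := by
  have hR : 0 < t ^ (1 / α) := by positivity
  simp_rw [pbar_scale hα ht x]
  rw [integral_const_mul,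
    integral_sub_right_eq_self (fun z => pbar α K d 1 0 ((t ^ (1 / α))⁻¹ • z)) x,
    Measure.integral_comp_inv_smul_of_nonneg _ _ hR.le, finrank_euclideanSpace_fin, smul_eq_mul,
    ← mul_assoc, inv_mul_cancel₀ (by positivity), one_mul]

/-- Prefactor bound for a time at least half of `t`. -/
theorem prefactor_le {β t τ : ℝ} (hβ : 0 ≤ β) (ht : 0 < t) (h : t / 2 ≤ τ) :
    τ ^ (-β) ≤ 2 ^ β * t ^ (-β) := by
  calc τ ^ (-β) ≤ (t / 2) ^ (-β) :=
        Real.rpow_le_rpow_of_nonpos (by positivity) h (by linarith)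
    _ = 2 ^ β * t ^ (-β) := by
        rw [Real.div_rpow ht.le (by norm_num), Real.rpow_neg (by norm_num : (0:ℝ) ≤ 2)]
        field_simp

theorem gauss_exponent {τ s a b c : ℝ} (hτ : 0 < τ) (hs : 0 < s) (hc : 0 ≤ c)
    (habc : c ≤ a + b) : c ^ 2 / (τ + s) ≤ a ^ 2 / τ + b ^ 2 / s := by
  have h1 : c ^ 2 / (τ + s) ≤ (a + b) ^ 2 / (τ + s) := by gcongr
  refine h1.trans ?_
  rw [div_add_div _ _ hτ.ne' hs.ne', div_le_div_iff₀ (by positivity) (by positivity)]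
  nlinarith [mul_nonneg (mul_nonneg hτ.le hs.le) (sq_nonneg (a * s - b * τ)), sq_nonneg (a * s - b * τ)]

theorem threeP_gauss {K₁ K₂ : ℝ} (hK₁ : 0 < K₁) (hK₂ : 0 < K₂) {β : ℝ} (hβ : 0 ≤ β)
    {τ s a b c : ℝ} (hτ : 0 < τ) (hs : 0 < s) (hc : 0 ≤ c) (habc : c ≤ a + b) :
    (τ ^ (-β) * Real.exp (-K₁ * a ^ 2 / τ)) * (s ^ (-β) * Real.exp (-K₂ * b ^ 2 / s))
      ≤ (2 ^ β * ((τ + s) ^ (-β) * Real.exp (-(min K₁ K₂ / 2) * c ^ 2 / (τ + s)))) *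
        (τ ^ (-β) * Real.exp (-(min K₁ K₂ / 2) * a ^ 2 / τ)
          + s ^ (-β) * Real.exp (-(min K₁ K₂ / 2) * b ^ 2 / s)) := by
  set k := min K₁ K₂ with hk
  have hk0 : 0 < k := lt_min hK₁ hK₂
  have hE := gauss_exponent hτ hs hc habc
  have hA : 0 ≤ a ^ 2 / τ := by positivity
  have hB : 0 ≤ b ^ 2 / s := by positivity
  have r : ∀ K u v : ℝ, -K * u / v = -(K * (u / v)) := by intros; ring
  simp only [r]
  set A := a ^ 2 / τ
  set B := b ^ 2 / s
  set D := c ^ 2 / (τ + s)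
  have h1 : K₁ * A ≥ k * A := mul_le_mul_of_nonneg_right (min_le_left _ _) hA
  have h2 : K₂ * B ≥ k * B := mul_le_mul_of_nonneg_right (min_le_right _ _) hB
  have h3 : k / 2 * D ≤ k / 2 * (A + B) := by gcongr
  have hA' : 0 ≤ k / 2 * A := by positivity
  have hB' : 0 ≤ k / 2 * B := by positivity
  have e1 : Real.exp (-(K₁ * A)) * Real.exp (-(K₂ * B))
      ≤ Real.exp (-(k / 2 * D)) * Real.exp (-(k / 2 * A)) := by
    rw [← Real.exp_add, ← Real.exp_add]; apply Real.exp_le_exp.2; linarith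
  have e2 : Real.exp (-(K₁ * A)) * Real.exp (-(K₂ * B))
      ≤ Real.exp (-(k / 2 * D)) * Real.exp (-(k / 2 * B)) := by
    rw [← Real.exp_add, ← Real.exp_add]; apply Real.exp_le_exp.2; linarith
  have pτ : 0 < τ ^ (-β) := by positivity
  have ps : 0 < s ^ (-β) := by positivity
  rcases le_total τ s with h | h
  · have hp := prefactor_le hβ (add_pos hτ hs) (show (τ + s) / 2 ≤ s by linarith)
    calc _ = τ ^ (-β) * s ^ (-β) * (Real.exp (-(K₁ * A)) * Real.exp (-(K₂ * B))) := by ring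
      _ ≤ τ ^ (-β) * (2 ^ β * (τ + s) ^ (-β)) *
          (Real.exp (-(k / 2 * D)) * Real.exp (-(k / 2 * A))) := by gcongr
      _ = (2 ^ β * ((τ + s) ^ (-β) * Real.exp (-(k / 2 * D)))) *
        (τ ^ (-β) * Real.exp (-(k / 2 * A))) := by ring
      _ ≤ _ := by
        apply mul_le_mul_of_nonneg_left _ (by positivity)
        have : 0 ≤ s ^ (-β) * Real.exp (-(k / 2 * B)) := by positivity
        linarith
  · have hp := prefactor_le hβ (add_pos hτ hs) (show (τ + s) / 2 ≤ τ by linarith)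
    calc _ = τ ^ (-β) * s ^ (-β) * (Real.exp (-(K₁ * A)) * Real.exp (-(K₂ * B))) := by ring
      _ ≤ (2 ^ β * (τ + s) ^ (-β)) * s ^ (-β) *
          (Real.exp (-(k / 2 * D)) * Real.exp (-(k / 2 * B))) := by gcongr
      _ = (2 ^ β * ((τ + s) ^ (-β) * Real.exp (-(k / 2 * D)))) *
        (s ^ (-β) * Real.exp (-(k / 2 * B))) := by ring
      _ ≤ _ := by
        apply mul_le_mul_of_nonneg_left _ (by positivity)
        have : 0 ≤ τ ^ (-β) * Real.exp (-(k / 2 * A)) := by positivity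
        linarith

/-- scalar profile of the stable bound -/
noncomputable def prof (α K δ t r : ℝ) : ℝ :=
  t ^ (-δ / α) / (max K (r / t ^ (1 / α))) ^ (δ + α)

theorem prof_nonneg {α K δ t r : ℝ} (hK : 0 < K) (ht : 0 < t) : 0 ≤ prof α K δ t r := by
  unfold prof
  have : 0 < max K (r / t ^ (1 / α)) := lt_max_of_lt_left hK
  positivity

theorem prof_mono {α K K' δ t r : ℝ} (hα : 0 < α) (hδ : 0 ≤ δ) (hK : 0 < K) (hKK : K ≤ K')
    (ht : 0 < t) : prof α K' δ t r ≤ prof α K δ t r := by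
  unfold prof
  have : 0 < max K (r / t ^ (1 / α)) := lt_max_of_lt_left hK
  gcongr

theorem prof_tail_eq {α δ t r : ℝ} (hα : 0 < α) (ht : 0 < t) (hr : 0 < r) :
    t ^ (-δ / α) / (r / t ^ (1 / α)) ^ (δ + α) = t * r ^ (-(δ + α)) := by
  rw [Real.div_rpow hr.le (by positivity), ← Real.rpow_mul ht.le, Real.rpow_neg hr.le]
  have : t ^ (-δ / α) * t ^ (1 / α * (δ + α)) = t := by
    rw [← Real.rpow_add ht]
    have : -δ / α + 1 / α * (δ + α) = 1 := by field_simp; ring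
    rw [this, Real.rpow_one]
  rw [div_div_eq_mul_div, this]; rfl

theorem prof_le_tail {α K δ t r : ℝ} (hα : 0 < α) (hδ : 0 ≤ δ) (ht : 0 < t) (hr : 0 < r) :
    prof α K δ t r ≤ t * r ^ (-(δ + α)) := by
  rw [← prof_tail_eq hα ht hr]
  unfold prof
  gcongr
  exact le_max_right _ _

theorem prof_near {α K δ t τ r c : ℝ} (hα : 0 < α) (hδ : 0 ≤ δ) (hK : 0 < K) (ht : 0 < t)
    (h : t / 2 ≤ τ) (hc : c / t ^ (1 / α) ≤ K) :
    prof α K δ τ r ≤ 2 ^ (δ / α) * prof α K δ t c := by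
  unfold prof
  rw [max_eq_left hc, ← mul_div_assoc]
  have hp := prefactor_le (β := δ / α) (by positivity) ht h
  rw [← neg_div] at hp
  have : 0 < max K (r / τ ^ (1 / α)) := lt_max_of_lt_left hK
  gcongr
  exact le_max_left _ _

theorem prof_far {α K δ t τ r c : ℝ} (hα : 0 < α) (hδ : 0 ≤ δ) (hK : 0 < K) (hτ : 0 < τ)
    (h : τ ≤ t) (hc : K ≤ c / t ^ (1 / α)) (hr : c / 2 ≤ r) :
    prof α K δ τ r ≤ 2 ^ (δ + α) * prof α K δ t c := by
  have ht : 0 < t := hτ.trans_le h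
  have hc0 : 0 < c := by
    by_contra hn
    have : c / t ^ (1 / α) ≤ 0 := div_nonpos_of_nonpos_of_nonneg (not_lt.1 hn) (by positivity)
    linarith
  have hr0 : 0 < r := by linarith
  refine (prof_le_tail hα hδ hτ hr0).trans ?_
  have e : prof α K δ t c = t * c ^ (-(δ + α)) := by
    rw [← prof_tail_eq hα ht hc0]; unfold prof; rw [max_eq_right hc]
  rw [e]
  have hp := prefactor_le (β := δ + α) (by positivity) hc0 hr
  calc τ * r ^ (-(δ + α)) ≤ t * (2 ^ (δ + α) * c ^ (-(δ + α))) := by gcongr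
    _ = _ := by ring

theorem prof_or {α K δ τ s a b c : ℝ} (hα : 0 < α) (hδ : 0 ≤ δ) (hK : 0 < K) (hτ : 0 < τ)
    (hs : 0 < s) (habc : c ≤ a + b) :
    prof α K δ τ a ≤ (2 ^ (δ / α) + 2 ^ (δ + α)) * prof α K δ (τ + s) c ∨
    prof α K δ s b ≤ (2 ^ (δ / α) + 2 ^ (δ + α)) * prof α K δ (τ + s) c := by
  have ht : 0 < τ + s := by positivity
  have hp : 0 ≤ prof α K δ (τ + s) c := prof_nonneg hK ht
  have h1 : 2 ^ (δ / α) * prof α K δ (τ + s) c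
      ≤ (2 ^ (δ / α) + 2 ^ (δ + α)) * prof α K δ (τ + s) c := by
    gcongr; linarith [Real.rpow_pos_of_pos (two_pos (α := ℝ)) (δ + α)]
  have h2 : 2 ^ (δ + α) * prof α K δ (τ + s) c
      ≤ (2 ^ (δ / α) + 2 ^ (δ + α)) * prof α K δ (τ + s) c := by
    gcongr; linarith [Real.rpow_pos_of_pos (two_pos (α := ℝ)) (δ / α)]
  rcases le_total (c / (τ + s) ^ (1 / α)) K with hc | hc
  · rcases le_total τ s with h | h
    · exact Or.inr ((prof_near hα hδ hK ht (by linarith) hc).trans h1)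
    · exact Or.inl ((prof_near hα hδ hK ht (by linarith) hc).trans h1)
  · rcases le_total a b with h | h
    · exact Or.inr ((prof_far hα hδ hK hs (by linarith) hc (by linarith)).trans h2)
    · exact Or.inl ((prof_far hα hδ hK hτ (by linarith) hc (by linarith)).trans h2)

theorem threeP {α : ℝ} (hα : 0 < α) (d : ℕ) {K₁ K₂ : ℝ} (hK₁ : 0 < K₁) (hK₂ : 0 < K₂) :
    ∃ K > 0, ∃ C > 0, ∀ τ s : ℝ, 0 < τ → 0 < s → ∀ x y z : EuclideanSpace ℝ (Fin d),
      pbar α K₁ d τ x z * pbar α K₂ d s z y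
        ≤ (C * pbar α K d (τ + s) x y) * (pbar α K d τ x z + pbar α K d s z y) := by
  have tri : ∀ x y z : EuclideanSpace ℝ (Fin d), ‖y - x‖ ≤ ‖z - x‖ + ‖y - z‖ := by
    intro x y z
    have := norm_add_le (z - x) (y - z)
    rwa [show z - x + (y - z) = y - x by abel] at this
  have hk : 0 < min K₁ K₂ := lt_min hK₁ hK₂
  by_cases h2 : α = 2
  · refine ⟨min K₁ K₂ / 2, by positivity, 2 ^ ((d : ℝ) / 2), by positivity, ?_⟩
    intro τ s hτ hs x y z
    simp only [pbar, h2, if_true, neg_div 2 (d : ℝ)]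
    exact threeP_gauss hK₁ hK₂ (by positivity) hτ hs (norm_nonneg _) (tri x y z)
  · refine ⟨min K₁ K₂, hk, 2 ^ ((d : ℝ) / α) + 2 ^ ((d : ℝ) + α), by positivity, ?_⟩
    intro τ s hτ hs x y z
    have e : ∀ K t (u v : EuclideanSpace ℝ (Fin d)),
        pbar α K d t u v = prof α K d t ‖v - u‖ := by
      intro K t u v; simp only [pbar, h2, if_false, prof]
    simp only [e]
    have hd : (0:ℝ) ≤ d := by positivity
    have m1 := prof_mono (r := ‖z - x‖) hα hd hk (min_le_left K₁ K₂) hτ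
    have m2 := prof_mono (r := ‖y - z‖) hα hd hk (min_le_right K₁ K₂) hs
    have p1 := prof_nonneg (α := α) (δ := d) (r := ‖z - x‖) hk hτ
    have p2 := prof_nonneg (α := α) (δ := d) (r := ‖y - z‖) hk hs
    have p3 := prof_nonneg (α := α) (δ := d) (r := ‖y - z‖) hK₂ hs
    refine (mul_le_mul m1 m2 p3 p1).trans ?_
    rcases prof_or hα hd hk hτ hs (tri x y z) with h | h <;> nlinarith

/-- Semigroup property of the stable/Gaussian-type density bounds:
for every `α ∈ (0,2]`, `d ≥ 1`, `T > 0` and `K₁, K₂ > 0`, there exist `K > 0` and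
`C > 0` such that for all `t ∈ (0,T]`, `τ ∈ (0,t)` and `x, y ∈ ℝ^d`,
`∫ p̄^α_{K₁}(τ, x, z) p̄^α_{K₂}(t − τ, z, y) dz ≤ C p̄^α_K(t, x, y)`. -/
theorem pbar_semigroup_property
    (α : ℝ) (hα0 : 0 < α) (hα2 : α ≤ 2) (d : ℕ) (hd : 1 ≤ d)
    (T : ℝ) (hT : 0 < T) (K₁ K₂ : ℝ) (hK₁ : 0 < K₁) (hK₂ : 0 < K₂) :
    ∃ K > 0, ∃ C > 0, ∀ t : ℝ, 0 < t → t ≤ T → ∀ τ : ℝ, 0 < τ → τ < t →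
      ∀ x y : EuclideanSpace ℝ (Fin d),
      (∫ z : EuclideanSpace ℝ (Fin d), pbar α K₁ d τ x z * pbar α K₂ d (t - τ) z y)
        ≤ C * pbar α K d t x y := by
  obtain ⟨K, hK, C, hC, h⟩ := threeP hα0 d hK₁ hK₂
  set I := ∫ u : EuclideanSpace ℝ (Fin d), pbar α K d 1 0 u with hI
  have hI0 : 0 ≤ I := integral_nonneg fun u => pbar_nonneg hK one_pos _ _
  refine ⟨K, hK, C * (2 * I) + 1, by positivity, ?_⟩
  intro t ht _ τ hτ hτt x y
  have hs : 0 < t - τ := sub_pos.2 hτt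
  have i1 := pbar_integrable (d := d) hα0 hK hτ x
  have i2 := pbar_integrable (d := d) hα0 hK hs y
  have hp := pbar_nonneg (α := α) (d := d) hK ht x y
  calc (∫ z : EuclideanSpace ℝ (Fin d), pbar α K₁ d τ x z * pbar α K₂ d (t - τ) z y)
      ≤ ∫ z : EuclideanSpace ℝ (Fin d),
          (C * pbar α K d t x y) * (pbar α K d τ x z + pbar α K d (t - τ) y z) := by
        apply integral_mono_of_nonneg
        · exact Filter.Eventually.of_forall fun z =>
            mul_nonneg (pbar_nonneg hK₁ hτ _ _) (pbar_nonneg hK₂ hs _ _)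
        · exact (i1.add i2).const_mul _
        · refine Filter.Eventually.of_forall fun z => ?_
          have := h τ (t - τ) hτ hs x y z
          rw [add_sub_cancel] at this
          simpa only [pbar_comm α K d (t - τ) y z] using this
    _ = (C * pbar α K d t x y) * (I + I) := by
        rw [integral_const_mul, integral_add i1 i2, pbar_integral hα0 hτ, pbar_integral hα0 hs]
    _ ≤ _ := by nlinarith
end

section
/- For every α ∈ (0, 2), dimension d ≥ 1 and K > 0, there exists a constant C > 0 such that for all real numbers s, t with 0 < s < t and all x, z, ξ ∈ ℝ^d, at least one of the following two inequalities holds: p̄^α_K(s, x, x + z) ≤ C p̄^α_K(t, x, x + ξ), or (1/(t − s)) p̄^α_K(t − s, x + z, x + ξ) ≤ C (1/t) p̄^α_K(t, x, x + ξ). -/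
open Filter Real MeasureTheory

/-- The `α`-stable-type density bound:
`p̄^α_K(t, x, y) = t^{−d/α} / ( max(K, |y − x| / t^{1/α}) )^{d+α}` for `α ∈ (0,2)`. -/
noncomputable def pbarStable (α K : ℝ) (d : ℕ) (t : ℝ)
    (x y : EuclideanSpace ℝ (Fin d)) : ℝ :=
  t ^ (-(d : ℝ) / α) / (max K (‖y - x‖ / t ^ (1 / α))) ^ ((d : ℝ) + α)

theorem pbarStable_eq (α K : ℝ) (hα0 : 0 < α) (hK : 0 < K) (d : ℕ) (t : ℝ) (ht : 0 < t)
    (x y : EuclideanSpace ℝ (Fin d)) :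
    pbarStable α K d t x y = t / (max (K * t ^ (1 / α)) ‖y - x‖) ^ ((d : ℝ) + α) := by
  have hr : 0 < t ^ (1 / α) := Real.rpow_pos_of_pos ht _
  have h1 : max (K * t ^ (1 / α)) ‖y - x‖
      = max K (‖y - x‖ / t ^ (1 / α)) * t ^ (1 / α) := by
    rw [max_mul_of_nonneg _ _ hr.le, div_mul_cancel₀ _ hr.ne']
  have hM : 0 < max K (‖y - x‖ / t ^ (1 / α)) := lt_max_of_lt_left hK
  have h2 : (t ^ (1 / α)) ^ ((d : ℝ) + α) = t ^ ((d : ℝ) / α) * t := by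
    rw [← Real.rpow_mul ht.le, show 1 / α * ((d : ℝ) + α) = (d : ℝ) / α + 1 by field_simp,
      Real.rpow_add ht, Real.rpow_one]
  have h3 : 0 < t ^ ((d : ℝ) / α) := Real.rpow_pos_of_pos ht _
  have h4 : 0 < max K (‖y - x‖ / t ^ (1 / α)) ^ ((d : ℝ) + α) := Real.rpow_pos_of_pos hM _
  unfold pbarStable
  rw [h1, Real.mul_rpow hM.le hr.le, h2, neg_div, Real.rpow_neg ht.le]
  field_simp

/-- Scaling comparison of the reciprocal powers. -/
theorem inv_rpow_le (c a b q : ℝ) (hc : 0 < c) (ha : 0 < a) (hb : 0 < b) (hq : 0 < q)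
    (h : a ≤ c * b) : 1 / b ^ q ≤ c ^ q * (1 / a ^ q) := by
  have h1 : a ^ q ≤ c ^ q * b ^ q := by
    rw [← Real.mul_rpow hc.le hb.le]
    exact Real.rpow_le_rpow ha.le h hq.le
  have := Real.rpow_pos_of_pos ha q
  have := Real.rpow_pos_of_pos hb q
  rw [mul_one_div, div_le_div_iff₀ (by assumption) (by assumption)]
  linarith

theorem half_rpow_bound (α K u t : ℝ) (hα0 : 0 < α) (hK : 0 < K) (hu : 0 < u) (h : t ≤ 2 * u)
    (ht : 0 < t) : K * t ^ (1 / α) ≤ (2 + 2 ^ (1 / α)) * (K * u ^ (1 / α)) := by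
  have h1 : t ^ (1 / α) ≤ 2 ^ (1 / α) * u ^ (1 / α) := by
    rw [← Real.mul_rpow (by norm_num) hu.le]
    exact Real.rpow_le_rpow ht.le h (by positivity)
  have h2 : 0 < u ^ (1 / α) := Real.rpow_pos_of_pos hu _
  have h3 := mul_le_mul_of_nonneg_left h1 hK.le
  have h4 := mul_pos hK h2
  nlinarith

/-- The dichotomy for stable-type densities: for `α ∈ (0,2)`, `d ≥ 1`, `K > 0` there is
`C > 0` such that for all `0 < s < t` and `x, z, ξ ∈ ℝ^d`, either
`p̄^α_K(s, x, x+z) ≤ C p̄^α_K(t, x, x+ξ)` or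
`(1/(t−s)) p̄^α_K(t−s, x+z, x+ξ) ≤ C (1/t) p̄^α_K(t, x, x+ξ)`. -/
theorem pbar_alternative
    (α : ℝ) (hα0 : 0 < α) (hα2 : α < 2) (d : ℕ) (hd : 1 ≤ d) (K : ℝ) (hK : 0 < K) :
    ∃ C > 0, ∀ s t : ℝ, 0 < s → s < t → ∀ x z ξ : EuclideanSpace ℝ (Fin d),
      pbarStable α K d s x (x + z) ≤ C * pbarStable α K d t x (x + ξ) ∨
      (1 / (t - s)) * pbarStable α K d (t - s) (x + z) (x + ξ)
        ≤ C * (1 / t) * pbarStable α K d t x (x + ξ) := by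
  have hE : (0 : ℝ) < 2 ^ (1 / α) := Real.rpow_pos_of_pos (by norm_num) _
  have hc : (0 : ℝ) < 2 + 2 ^ (1 / α) := by linarith
  have hq : (0 : ℝ) < (d : ℝ) + α := by positivity
  refine ⟨(2 + 2 ^ (1 / α)) ^ ((d : ℝ) + α), Real.rpow_pos_of_pos hc _, ?_⟩
  intro s t hs hst x z ξ
  have ht : 0 < t := hs.trans hst
  have hts : 0 < t - s := sub_pos.2 hst
  rw [pbarStable_eq α K hα0 hK d s hs, pbarStable_eq α K hα0 hK d t ht,
    pbarStable_eq α K hα0 hK d (t - s) hts, add_sub_cancel_left, add_sub_cancel_left,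
    add_sub_add_left_eq_sub]
  have pos : ∀ u : ℝ, 0 < u → ∀ w : EuclideanSpace ℝ (Fin d),
      0 < max (K * u ^ (1 / α)) ‖w‖ := fun u hu w =>
    lt_max_of_lt_left (mul_pos hK (Real.rpow_pos_of_pos hu _))
  have key : max (K * t ^ (1 / α)) ‖ξ‖ ≤ (2 + 2 ^ (1 / α)) * max (K * s ^ (1 / α)) ‖z‖ ∨
      max (K * t ^ (1 / α)) ‖ξ‖
        ≤ (2 + 2 ^ (1 / α)) * max (K * (t - s) ^ (1 / α)) ‖ξ - z‖ := by
    have a1 := le_max_left (K * s ^ (1 / α)) ‖z‖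
    have a2 := le_max_right (K * s ^ (1 / α)) ‖z‖
    have b1 := le_max_left (K * (t - s) ^ (1 / α)) ‖ξ - z‖
    have b2 := le_max_right (K * (t - s) ^ (1 / α)) ‖ξ - z‖
    rcases max_cases (K * t ^ (1 / α)) ‖ξ‖ with ⟨h, _⟩ | ⟨h, _⟩
    · rw [h]
      rcases le_total t (2 * s) with h' | h'
      · left
        exact (half_rpow_bound α K s t hα0 hK hs h' ht).trans
          (mul_le_mul_of_nonneg_left a1 hc.le)
      · right
        exact (half_rpow_bound α K (t - s) t hα0 hK hts (by linarith) ht).trans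
          (mul_le_mul_of_nonneg_left b1 hc.le)
    · rw [h]
      have tri : ‖ξ‖ ≤ ‖z‖ + ‖ξ - z‖ := by
        simpa using norm_add_le z (ξ - z)
      have hz := norm_nonneg z
      have hw := norm_nonneg (ξ - z)
      rcases le_total ‖z‖ ‖ξ - z‖ with h' | h'
      · right
        refine le_trans ?_ (mul_le_mul_of_nonneg_left b2 hc.le)
        nlinarith [mul_nonneg hE.le hw]
      · left
        refine le_trans ?_ (mul_le_mul_of_nonneg_left a2 hc.le)
        nlinarith [mul_nonneg hE.le hz]
  have hC := Real.rpow_pos_of_pos hc ((d : ℝ) + α)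
  have hT := Real.rpow_pos_of_pos (pos t ht ξ) ((d : ℝ) + α)
  rcases key with h | h
  · left
    have := inv_rpow_le _ _ _ _ hc (pos t ht ξ) (pos s hs z) hq h
    have h0 : 0 < (2 + 2 ^ (1 / α)) ^ ((d : ℝ) + α)
      * (1 / max (K * t ^ (1 / α)) ‖ξ‖ ^ ((d : ℝ) + α)) := by positivity
    rw [← mul_one_div s, ← mul_one_div t, mul_left_comm]
    exact mul_le_mul hst.le this
      (one_div_nonneg.2 (Real.rpow_pos_of_pos (pos s hs z) _).le) ht.le
  · right
    have := inv_rpow_le _ _ _ _ hc (pos t ht ξ) (pos (t - s) hts (ξ - z)) hq h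
    rw [mul_assoc, ← mul_one_div t, ← mul_one_div (t - s), ← mul_assoc (1 / t),
      ← mul_assoc (1 / (t - s)), one_div_mul_cancel hts.ne', one_div_mul_cancel ht.ne',
      one_mul, one_mul]
    exact this
end
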